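/- Let n ≥ 3 and 0 ≤ k ≤ n−3, and set N = binom(2n−k−1, n) · binom(n−1, k) (the dimension of the irreducible SL(n,ℂ)-module with highest weight (n−k, 1^k), given by the Weyl dimension formula). There exist polynomials q₁, …, q_N ∈ MvPolynomial (Fin n × Fin n) ℂ such that for every Hermitian matrix A ∈ Matrix (Fin n) (Fin n) ℂ with eigenvalues λ₁(A), …, λ_n(A) (listed with multiplicity): Σ_{1≤i₁<⋯<i_{n−k}≤n} ∏_{1≤s<t≤n−k} (λ_{i_s}(A) − λ_{i_t}(A))² = Σ_{m=1}^{N} ‖q_m(A)‖². Equivalently, the k-subdiscriminant of Hermitian n×n matrices is a sum of 2N squares of real polynomial functions. -/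

import Mathlib

namespace SubDisc

open Finset MvPolynomial

/-- Entrywise (Kronecker) product of a family of matrices. -/
noncomputable def kron {R : Type*} [CommRing R] {n d : ℕ} (M : Fin d → Matrix (Fin n) (Fin n) R) :
    Matrix (Fin d → Fin n) (Fin d → Fin n) R :=
  Matrix.of fun a b => ∏ s, M s (a s) (b s)

theorem kron_mul {R : Type*} [CommRing R] {n d : ℕ} (M M' : Fin d → Matrix (Fin n) (Fin n) R) :
    kron M * kron M' = kron (fun s => M s * M' s) := by
  ext a b
  simp only [kron, Matrix.mul_apply, Matrix.of_apply, Finset.prod_univ_sum, Fintype.piFinset_univ,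
    Finset.prod_mul_distrib]

theorem kron_one {R : Type*} [CommRing R] {n d : ℕ} :
    kron (fun _ : Fin d => (1 : Matrix (Fin n) (Fin n) R)) = 1 := by
  ext a b
  simp only [kron, Matrix.of_apply, Matrix.one_apply]
  by_cases h : a = b
  · subst h; simp
  · rw [if_neg h]
    obtain ⟨s, hs⟩ := Function.ne_iff.mp h
    exact Finset.prod_eq_zero (mem_univ s) (if_neg hs)

/-- precomposition equivalence -/
def pre {n d : ℕ} (σ : Equiv.Perm (Fin d)) : (Fin d → Fin n) ≃ (Fin d → Fin n) :=
  Equiv.arrowCongr σ.symm (Equiv.refl _)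

theorem pre_apply {n d : ℕ} (σ : Equiv.Perm (Fin d)) (a : Fin d → Fin n) :
    pre σ a = a ∘ σ := by
  ext; simp [pre]

/-- The covariant. -/
noncomputable def Tm {R : Type*} [CommRing R] {n : ℕ} (d : ℕ) (A : Matrix (Fin n) (Fin n) R) :
    Matrix (Fin d → Fin n) (Fin d → Fin n) R :=
  ∑ τ : Equiv.Perm (Fin d), ∑ σ : Equiv.Perm (Fin d),
    (Equiv.Perm.sign σ) • (kron (fun s : Fin d => A ^ (s : ℕ))).submatrix (pre σ) (pre τ)

theorem kron_const_submatrix {R : Type*} [CommRing R] {n d : ℕ} (U : Matrix (Fin n) (Fin n) R)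
    (σ : Equiv.Perm (Fin d)) :
    (kron (fun _ : Fin d => U)).submatrix (pre σ) (pre σ) = kron (fun _ : Fin d => U) := by
  ext a b
  simp only [kron, Matrix.submatrix_apply, Matrix.of_apply, pre_apply, Function.comp]
  exact Equiv.prod_comp σ (fun s => U (a s) (b s))

theorem Tm_conj {R : Type*} [CommRing R] {n d : ℕ} (U L V : Matrix (Fin n) (Fin n) R)
    (hVU : V * U = 1) (hUV : U * V = 1) :
    Tm d (U * L * V) = kron (fun _ => U) * Tm d L * kron (fun _ => V) := by
  have hpow : ∀ s : ℕ, (U * L * V) ^ s = U * L ^ s * V := by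
    intro s
    induction s with
    | zero => simp [hUV]
    | succ s ih =>
      rw [pow_succ, ih, pow_succ]
      calc U * L ^ s * V * (U * L * V) = U * L ^ s * (V * U) * L * V := by noncomm_ring
        _ = _ := by rw [hVU]; noncomm_ring
  have hX : kron (fun s : Fin d => (U * L * V) ^ (s : ℕ)) =
      kron (fun _ => U) * kron (fun s : Fin d => L ^ (s : ℕ)) * kron (fun _ => V) := by
    rw [kron_mul, kron_mul]
    simp only [hpow]
  unfold Tm
  rw [hX, Finset.mul_sum, Finset.sum_mul]
  refine Finset.sum_congr rfl fun τ _ => ?_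
  rw [Finset.mul_sum, Finset.sum_mul]
  refine Finset.sum_congr rfl fun σ _ => ?_
  rw [Matrix.mul_smul, Matrix.smul_mul]
  congr 1
  conv_rhs => rw [← kron_const_submatrix U σ, ← kron_const_submatrix V τ]
  rw [Matrix.submatrix_mul_equiv, Matrix.submatrix_mul_equiv]

/-- the determinant -/
noncomputable def Dm {R : Type*} [CommRing R] {n d : ℕ} (A : Matrix (Fin n) (Fin n) R)
    (a c : Fin d → Fin n) : R :=
  Matrix.det (Matrix.of fun r s : Fin d => (A ^ (s : ℕ)) (a r) (c s))

theorem Tm_apply {R : Type*} [CommRing R] {n d : ℕ} (A : Matrix (Fin n) (Fin n) R)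
    (a b : Fin d → Fin n) : Tm d A a b = ∑ τ : Equiv.Perm (Fin d), Dm A a (b ∘ τ) := by
  simp only [Tm, Matrix.sum_apply, Dm, Matrix.det_apply, Matrix.smul_apply, kron,
    Matrix.submatrix_apply, Matrix.of_apply, pre_apply, Function.comp]

theorem Tm_map {R S : Type*} [CommRing R] [CommRing S] {n d : ℕ} (f : R →+* S)
    (A : Matrix (Fin n) (Fin n) R) (a b : Fin d → Fin n) :
    Tm d (f.mapMatrix A) a b = f (Tm d A a b) := by
  simp only [Tm_apply, map_sum]
  refine Finset.sum_congr rfl fun τ _ => ?_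
  simp only [Dm]
  rw [RingHom.map_det]
  congr 1
  ext r s
  have : f.mapMatrix A ^ (s : ℕ) = f.mapMatrix (A ^ (s : ℕ)) := (map_pow _ _ _).symm
  simp only [Matrix.of_apply, RingHom.mapMatrix_apply, Matrix.map_apply] at this ⊢
  rw [this]
  rfl

theorem Tm_diag {R : Type*} [CommRing R] {n d : ℕ} (l : Fin n → R) (a b : Fin d → Fin n) :
    Tm d (Matrix.diagonal l) a b =
      Matrix.det (Matrix.vandermonde (l ∘ a)) *
        ((univ.filter fun ρ : Equiv.Perm (Fin d) => a ∘ ρ = b).card : R) := by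
  have h1 : ∀ τ σ : Equiv.Perm (Fin d),
      (∏ s : Fin d, ((Matrix.diagonal l) ^ (s : ℕ)) (a (σ s)) ((b ∘ τ) s)) =
      (∏ s : Fin d, l (a (σ s)) ^ (s : ℕ)) * if a ∘ (σ * τ⁻¹ : Equiv.Perm (Fin d)) = b then 1 else 0 := by
    intro τ σ
    have hiff : a ∘ (σ * τ⁻¹ : Equiv.Perm (Fin d)) = b ↔ ∀ s, a (σ s) = b (τ s) := by
      constructor
      · rintro rfl s; simp
      · intro h; ext s; have := h (τ⁻¹ s); simp at this; simp [this]
    simp only [Matrix.diagonal_pow, Function.comp]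
    by_cases h : ∀ s, a (σ s) = b (τ s)
    · rw [if_pos (hiff.mpr h), mul_one]
      refine Finset.prod_congr rfl fun s _ => ?_
      rw [← h s, Matrix.diagonal_apply_eq]; rfl
    · rw [if_neg (fun h' => h (hiff.mp h')), mul_zero]
      push Not at h
      obtain ⟨s, hs⟩ := h
      exact Finset.prod_eq_zero (mem_univ s) (Matrix.diagonal_apply_ne _ hs)
  rw [Tm_apply]
  simp only [Dm, Matrix.det_apply, Matrix.of_apply, h1]
  rw [Finset.sum_comm]
  simp only [Matrix.vandermonde_apply, Function.comp_apply]
  rw [Finset.sum_mul]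
  refine Finset.sum_congr rfl fun σ _ => ?_
  rw [← Finset.smul_sum, ← Finset.mul_sum, smul_mul_assoc]
  congr 2
  rw [Finset.card_filter]
  push_cast
  exact Fintype.sum_equiv ((Equiv.inv _).trans (Equiv.mulLeft σ)) _ _ (fun τ => by simp; congr)

theorem sum_norm_eq_trace {ι : Type*} [Fintype ι] [DecidableEq ι] (M : Matrix ι ι ℂ) :
    ((∑ a, ∑ b, ‖M a b‖ ^ 2 : ℝ) : ℂ) = (M * M.conjTranspose).trace := by
  simp only [Matrix.trace, Matrix.diag_apply, Matrix.mul_apply, Matrix.conjTranspose_apply]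
  push_cast
  refine Finset.sum_congr rfl fun a _ => Finset.sum_congr rfl fun b _ => ?_
  exact (Complex.mul_conj' _).symm

theorem kron_conjTranspose {n d : ℕ} (U : Matrix (Fin n) (Fin n) ℂ) :
    (kron (fun _ : Fin d => U)).conjTranspose = kron (fun _ : Fin d => U.conjTranspose) := by
  ext a b
  simp [kron, Matrix.conjTranspose_apply]

theorem sum_perm_card {n d : ℕ} (a : Fin d → Fin n) (ha : Function.Injective a) :
    ∑ b : Fin d → Fin n,
      ((univ.filter fun ρ : Equiv.Perm (Fin d) => a ∘ ρ = b).card : ℝ) ^ 2 = d.factorial := by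
  have h01 : ∀ b : Fin d → Fin n,
      ((univ.filter fun ρ : Equiv.Perm (Fin d) => a ∘ ρ = b).card) ≤ 1 := by
    intro b
    rw [Finset.card_le_one]
    intro x hx y hy
    simp only [mem_filter, mem_univ, true_and] at hx hy
    ext s
    have := congrFun (hx.trans hy.symm) s
    exact congrArg _ (ha this)
  have h2 : ∀ b : Fin d → Fin n,
      ((univ.filter fun ρ : Equiv.Perm (Fin d) => a ∘ ρ = b).card : ℝ) ^ 2 =
      ((univ.filter fun ρ : Equiv.Perm (Fin d) => a ∘ ρ = b).card : ℝ) := by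
    intro b
    have := h01 b
    interval_cases h : (univ.filter fun ρ : Equiv.Perm (Fin d) => a ∘ ρ = b).card <;> simp
  simp only [h2]
  rw [← Nat.cast_sum]
  have := Finset.card_eq_sum_card_fiberwise (s := (univ : Finset (Equiv.Perm (Fin d))))
    (t := (univ : Finset (Fin d → Fin n))) (f := fun ρ : Equiv.Perm (Fin d) => a ∘ (ρ : Fin d → Fin d)) (fun _ _ => by simp)
  rw [← this]
  simp [Fintype.card_perm]

theorem vander_noninj {n d : ℕ} (l : Fin n → ℝ) (a : Fin d → Fin n)
    (ha : ¬ Function.Injective a) : Matrix.det (Matrix.vandermonde (l ∘ a)) = 0 := by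
  simp only [Function.Injective] at ha
  push Not at ha
  obtain ⟨i, j, hij, hne⟩ := ha
  refine Matrix.det_zero_of_row_eq hne ?_
  ext s
  simp [Matrix.vandermonde_apply, hij]

theorem sum_norm_Tm {n d : ℕ} (A : Matrix (Fin n) (Fin n) ℂ) (hA : A.IsHermitian) :
    ∑ a, ∑ b, ‖Tm d A a b‖ ^ 2 =
      d.factorial * ∑ a : Fin d → Fin n,
        (Matrix.det (Matrix.vandermonde (hA.eigenvalues ∘ a))) ^ 2 := by
  set L : Matrix (Fin n) (Fin n) ℂ := Matrix.diagonal (fun i => (hA.eigenvalues i : ℂ)) with hL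
  set U : Matrix (Fin n) (Fin n) ℂ := (hA.eigenvectorUnitary : Matrix (Fin n) (Fin n) ℂ) with hU
  have hAe : A = U * L * U.conjTranspose := by
    have := hA.spectral_theorem
    rw [Unitary.conjStarAlgAut_apply] at this
    exact this
  have hUV : U * U.conjTranspose = 1 := Unitary.mul_star_self_of_mem hA.eigenvectorUnitary.2
  have hVU : U.conjTranspose * U = 1 := Unitary.star_mul_self_of_mem hA.eigenvectorUnitary.2
  have e1 : ∑ a, ∑ b, ‖Tm d A a b‖ ^ 2 = ∑ a, ∑ b, ‖Tm d L a b‖ ^ 2 := by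
    have : ((∑ a, ∑ b, ‖Tm d A a b‖ ^ 2 : ℝ) : ℂ) = ((∑ a, ∑ b, ‖Tm d L a b‖ ^ 2 : ℝ) : ℂ) := by
      rw [sum_norm_eq_trace, sum_norm_eq_trace]
      have hT : Tm d A = kron (fun _ => U) * Tm d L * kron (fun _ => U.conjTranspose) := by
        rw [← Tm_conj _ _ _ hVU hUV, ← hAe]
      have hPP : kron (fun _ : Fin d => U.conjTranspose) * kron (fun _ => U) = 1 := by
        rw [kron_mul]; simp only [hVU]; exact kron_one
      rw [hT, Matrix.conjTranspose_mul, Matrix.conjTranspose_mul, kron_conjTranspose,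
        kron_conjTranspose, Matrix.conjTranspose_conjTranspose]
      set P := kron (fun _ : Fin d => U)
      set Q := kron (fun _ : Fin d => U.conjTranspose)
      calc (P * Tm d L * Q * (P * ((Tm d L).conjTranspose * Q))).trace
          = (P * (Tm d L * (Q * P) * (Tm d L).conjTranspose * Q)).trace := by
            simp only [Matrix.mul_assoc]
        _ = _ := by
          rw [Matrix.trace_mul_comm, hPP, Matrix.mul_one, Matrix.mul_assoc, hPP, Matrix.mul_one]
    exact_mod_cast this
  rw [e1, Finset.mul_sum]
  refine Finset.sum_congr rfl fun a _ => ?_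
  have hv : Matrix.det (Matrix.vandermonde ((fun i => (hA.eigenvalues i : ℂ)) ∘ a)) =
      ((Matrix.det (Matrix.vandermonde (hA.eigenvalues ∘ a)) : ℝ) : ℂ) := by
    simp only [Matrix.det_vandermonde, Function.comp]
    push_cast
    rfl
  have hn : ∀ b, ‖Tm d L a b‖ ^ 2 = (Matrix.det (Matrix.vandermonde (hA.eigenvalues ∘ a))) ^ 2 *
      ((univ.filter fun ρ : Equiv.Perm (Fin d) => a ∘ ρ = b).card : ℝ) ^ 2 := by
    intro b
    rw [hL, Tm_diag, hv, norm_mul, mul_pow, Complex.norm_real, Complex.norm_natCast,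
      Real.norm_eq_abs, sq_abs]
  simp only [hn]
  rw [← Finset.mul_sum]
  by_cases ha : Function.Injective a
  · rw [sum_perm_card a ha, mul_comm]
  · rw [vander_noninj _ _ ha]; simp

theorem exists_perm_of_image {n d : ℕ} (a a' : Fin d → Fin n) (ha : Function.Injective a)
    (ha' : Function.Injective a') (h : Set.range a = Set.range a') :
    ∃ σ : Equiv.Perm (Fin d), a' = a ∘ σ := by
  refine ⟨(Equiv.ofInjective a' ha').trans
    ((Equiv.setCongr h.symm).trans (Equiv.ofInjective a ha).symm), ?_⟩
  ext s
  simp only [Function.comp, Equiv.trans_apply]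
  rw [Equiv.apply_ofInjective_symm ha]
  simp

theorem sum_vander {n d : ℕ} (l : Fin n → ℝ) :
    ∑ a : Fin d → Fin n, (Matrix.det (Matrix.vandermonde (l ∘ a))) ^ 2 =
      d.factorial * ∑ s ∈ univ.powersetCard d, ∏ i ∈ s, ∏ j ∈ s.filter (fun j => i < j),
        (l i - l j) ^ 2 := by
  classical
  have h1 : ∑ a : Fin d → Fin n, (Matrix.det (Matrix.vandermonde (l ∘ a))) ^ 2 =
      ∑ a ∈ univ.filter (fun a : Fin d → Fin n => Function.Injective a),
        (Matrix.det (Matrix.vandermonde (l ∘ a))) ^ 2 := by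
    symm
    refine Finset.sum_subset (Finset.subset_univ _) fun a _ ha => ?_
    rw [vander_noninj _ _ (by simpa using ha)]; simp
  have hmaps : ∀ a ∈ univ.filter (fun a : Fin d → Fin n => Function.Injective a),
      univ.image a ∈ (univ : Finset (Fin n)).powersetCard d := by
    intro a ha
    simp only [mem_filter, mem_univ, true_and] at ha
    rw [mem_powersetCard]
    exact ⟨subset_univ _, by rw [card_image_of_injective _ ha]; simp⟩
  rw [h1, ← Finset.sum_fiberwise_of_maps_to hmaps, Finset.mul_sum]
  refine Finset.sum_congr rfl fun s hs => ?_
  have hc : s.card = d := (mem_powersetCard.mp hs).2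
  set a0 : Fin d ↪o Fin n := s.orderEmbOfFin hc with ha0
  have hr : Set.range a0 = s := s.range_orderEmbOfFin hc
  have hsm : s = univ.map a0.toEmbedding := by
    apply Finset.coe_injective
    rw [← hr]; simp
  have key : ∑ a ∈ (univ.filter (fun a : Fin d → Fin n => Function.Injective a)).filter
        (fun a => univ.image a = s), (Matrix.det (Matrix.vandermonde (l ∘ a))) ^ 2 =
      ∑ σ : Equiv.Perm (Fin d), (Matrix.det (Matrix.vandermonde (l ∘ (a0 ∘ σ)))) ^ 2 := by
    symm
    refine Finset.sum_bij (fun σ _ => a0 ∘ σ) ?_ ?_ ?_ ?_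
    · intro σ _
      simp only [mem_filter, mem_univ, true_and]
      refine ⟨a0.injective.comp σ.injective, ?_⟩
      apply Finset.coe_injective
      rw [← hr, coe_image, coe_univ, Set.image_univ, Set.range_comp, σ.range_eq_univ, Set.image_univ]
    · intro σ _ σ' _ h
      ext i
      exact congrArg _ (a0.injective (congrFun h i))
    · intro a ha
      simp only [mem_filter, mem_univ, true_and] at ha
      obtain ⟨σ, hσ⟩ := exists_perm_of_image a0 a a0.injective ha.1 (by
        rw [hr, ← ha.2]; simp)
      exact ⟨σ, mem_univ _, hσ.symm⟩
    · intro σ _; rfl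
  rw [key]
  have hσ : ∀ σ : Equiv.Perm (Fin d), (Matrix.det (Matrix.vandermonde (l ∘ (a0 ∘ σ)))) ^ 2 =
      ∏ i ∈ s, ∏ j ∈ s.filter (fun j => i < j), (l i - l j) ^ 2 := by
    intro σ
    have e : Matrix.vandermonde (l ∘ (a0 ∘ σ)) = (Matrix.vandermonde (l ∘ a0)).submatrix σ id := by
      ext i j; simp [Matrix.vandermonde_apply]
    rw [e, Matrix.det_permute, mul_pow]
    have : (((Equiv.Perm.sign σ : ℤˣ) : ℤ) : ℝ) ^ 2 = 1 := by
      rcases Int.units_eq_one_or (Equiv.Perm.sign σ) with h | h <;> simp [h]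
    rw [this, one_mul, Matrix.det_vandermonde]
    conv_rhs => rw [hsm]
    rw [Finset.prod_map, ← Finset.prod_pow]
    refine Finset.prod_congr rfl fun i _ => ?_
    rw [Finset.filter_map, Finset.prod_map, ← Finset.prod_pow]
    refine Finset.prod_congr ?_ fun j _ => ?_
    · ext j; simp
    · simp only [Function.comp, RelEmbedding.coe_toEmbedding]; ring
  simp only [hσ]
  simp [Fintype.card_perm]

end SubDisc

namespace SubDisc

open Finset MvPolynomial

/-- The polynomial covariant. -/
noncomputable def fm {n d : ℕ} (A : Matrix (Fin n) (Fin n) ℂ) (a : Fin d → Fin n) :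
    MvPolynomial (Fin n) ℂ :=
  Matrix.det (Matrix.of fun r s : Fin d => ∑ j, C ((A ^ (s : ℕ)) (a r) j) * X j)

/-- content of a tuple -/
noncomputable def cont {n d : ℕ} (c : Fin d → Fin n) : Fin n →₀ ℕ :=
  ∑ s, Finsupp.single (c s) 1

theorem cont_apply {n d : ℕ} (c : Fin d → Fin n) (j : Fin n) :
    cont c j = (univ.filter fun s => c s = j).card := by
  simp only [cont, Finsupp.coe_finsetSum, Finset.sum_apply, Finset.card_filter,
    Finsupp.single_apply]

theorem cont_sum {n d : ℕ} (c : Fin d → Fin n) : ∑ j, cont c j = d := by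
  simp only [cont_apply]
  rw [← Finset.card_eq_sum_card_fiberwise (fun _ _ => by simp)]
  simp

theorem fm_expand {n d : ℕ} (A : Matrix (Fin n) (Fin n) ℂ) (a : Fin d → Fin n) :
    fm A a = ∑ c : Fin d → Fin n, monomial (cont c) (Dm A a c) := by
  have hm : ∀ (c : Fin d → Fin n) (z : ℂ), monomial (cont c) z = C z * ∏ s, X (c s) := by
    intro c z
    rw [cont, monomial_eq]
    congr 1
    rw [← Finsupp.prod_finsetSum_index (by simp) (by intros; rw [pow_add])]
    refine Finset.prod_congr rfl fun s _ => ?_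
    rw [Finsupp.prod_single_index (by simp), pow_one]
  simp only [hm]
  simp only [fm, Dm, Matrix.det_apply', Matrix.of_apply, map_sum, Finset.sum_mul]
  rw [Finset.sum_comm]
  refine Finset.sum_congr rfl fun σ _ => ?_
  rw [Finset.prod_univ_sum, Fintype.piFinset_univ, Finset.mul_sum]
  refine Finset.sum_congr rfl fun c _ => ?_
  rw [Finset.prod_mul_distrib, map_mul, map_prod, mul_assoc]
  simp

theorem fm_coeff {n d : ℕ} (A : Matrix (Fin n) (Fin n) ℂ) (a : Fin d → Fin n) (α : Fin n →₀ ℕ) :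
    coeff α (fm A a) = ∑ c : Fin d → Fin n, if cont c = α then Dm A a c else 0 := by
  rw [fm_expand, coeff_sum]
  simp only [coeff_monomial]

theorem exists_perm_of_cont {n d : ℕ} (b c : Fin d → Fin n) (h : cont c = cont b) :
    ∃ σ : Equiv.Perm (Fin d), b ∘ σ = c := by
  have e : ∀ j, Nonempty ({s // c s = j} ≃ {s // b s = j}) := by
    intro j
    refine Fintype.card_eq.mp ?_
    rw [Fintype.card_subtype, Fintype.card_subtype, ← cont_apply, ← cont_apply, h]
  refine ⟨Equiv.ofFiberEquiv fun j => (e j).some, ?_⟩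
  ext s
  exact congrArg _ (Equiv.ofFiberEquiv_map (fun j => (e j).some) s)

theorem cont_comp {n d : ℕ} (b : Fin d → Fin n) (σ : Equiv.Perm (Fin d)) :
    cont (b ∘ σ) = cont b := by
  simp only [cont, Function.comp]
  exact Equiv.sum_comp σ (fun s => Finsupp.single (b s) 1)

theorem Tm_eq_coeff {n d : ℕ} (A : Matrix (Fin n) (Fin n) ℂ) (a b : Fin d → Fin n) :
    Tm d A a b = ((univ.filter fun τ : Equiv.Perm (Fin d) => b ∘ τ = b).card : ℂ) *
      coeff (cont b) (fm A a) := by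
  rw [Tm_apply, fm_coeff, Finset.mul_sum,
    Finset.sum_comp (fun c => Dm A a c) (fun τ : Equiv.Perm (Fin d) => b ∘ (τ : Fin d → Fin d))]
  rw [Finset.sum_subset (Finset.subset_univ _)]
  · refine Finset.sum_congr rfl fun c _ => ?_
    split_ifs with h
    · rw [nsmul_eq_mul]
      congr 2
      obtain ⟨σ, rfl⟩ := exists_perm_of_cont b c h
      refine Finset.card_bij (fun τ _ => τ * σ⁻¹) ?_ ?_ ?_
      · intro τ hτ
        simp only [mem_filter, mem_univ, true_and] at hτ ⊢
        ext s
        have := congrFun hτ (σ⁻¹ s)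
        simp at this
        simp [this]
      · intro τ _ τ' _ h
        simpa using h
      · intro τ hτ
        refine ⟨τ * σ, ?_, by simp⟩
        simp only [mem_filter, mem_univ, true_and] at hτ ⊢
        ext s
        have := congrFun hτ (σ s)
        simp at this
        simp [this]
    · rw [mul_zero, Finset.card_eq_zero.mpr, zero_smul]
      rw [Finset.filter_eq_empty_iff]
      rintro τ - rfl
      exact h (cont_comp _ _)
  · intro c _ hc
    rw [Finset.card_eq_zero.mpr, zero_smul]
    rw [Finset.filter_eq_empty_iff]
    rintro τ - rfl
    exact hc (Finset.mem_image_of_mem _ (mem_univ _))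

theorem fm_koszul {n d : ℕ} (hd : 0 < d) (A : Matrix (Fin n) (Fin n) ℂ) (a : Fin (d + 1) → Fin n) :
    ∑ i : Fin (d + 1), (-1) ^ (i : ℕ) * X (a i) * fm A (a ∘ i.succAbove) = 0 := by
  obtain ⟨e, rfl⟩ : ∃ e, d = e + 1 := ⟨d - 1, by omega⟩
  set M : Matrix (Fin (e + 1 + 1)) (Fin (e + 1 + 1)) (MvPolynomial (Fin n) ℂ) :=
    Matrix.of fun r s => Fin.cases (X (a r))
      (fun s : Fin (e + 1) => ∑ j, C ((A ^ (s : ℕ)) (a r) j) * X j) s with hM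
  have h0 : M.det = 0 := by
    refine Matrix.det_zero_of_column_eq (i := 0) (j := Fin.succ 0) (by simp) ?_
    intro r
    simp only [hM, Matrix.of_apply, Fin.cases_zero, Fin.cases_succ]
    simp [Matrix.one_apply]
  rw [Matrix.det_succ_column_zero] at h0
  rw [← h0]
  rfl

theorem fm_perm {n d : ℕ} (A : Matrix (Fin n) (Fin n) ℂ) (a : Fin d → Fin n)
    (σ : Equiv.Perm (Fin d)) :
    fm A (a ∘ σ) = ((Equiv.Perm.sign σ : ℤ) : MvPolynomial (Fin n) ℂ) * fm A a := by
  unfold fm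
  rw [← Matrix.det_permute]
  rfl

theorem fm_noninj {n d : ℕ} (A : Matrix (Fin n) (Fin n) ℂ) (a : Fin d → Fin n)
    (ha : ¬ Function.Injective a) : fm A a = 0 := by
  simp only [Function.Injective] at ha
  push Not at ha
  obtain ⟨i, j, hij, hne⟩ := ha
  refine Matrix.det_zero_of_row_eq hne ?_
  ext1 s
  simp [hij]

theorem fm_homog {n d : ℕ} (A : Matrix (Fin n) (Fin n) ℂ) (a : Fin d → Fin n) (α : Fin n →₀ ℕ)
    (hα : ∑ j, α j ≠ d) : coeff α (fm A a) = 0 := by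
  rw [fm_coeff]
  refine Finset.sum_eq_zero fun c _ => if_neg ?_
  rintro rfl
  exact hα (cont_sum c)

/-- The Koszul kernel. -/
noncomputable def W (n d : ℕ) : Submodule ℂ ((Fin d → Fin n) → MvPolynomial (Fin n) ℂ) where
  carrier := {g | (∀ a (σ : Equiv.Perm (Fin d)),
      g (a ∘ σ) = ((Equiv.Perm.sign σ : ℤ) : MvPolynomial (Fin n) ℂ) * g a) ∧
    (∀ a, ¬ Function.Injective a → g a = 0) ∧
    (∀ a (α : Fin n →₀ ℕ), ∑ j, α j ≠ d → coeff α (g a) = 0) ∧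
    (∀ a : Fin (d + 1) → Fin n,
      ∑ i : Fin (d + 1), (-1) ^ (i : ℕ) * X (a i) * g (a ∘ i.succAbove) = 0)}
  zero_mem' := by simp
  add_mem' := by
    rintro g g' ⟨h1, h2, h3, h4⟩ ⟨h1', h2', h3', h4'⟩
    refine ⟨fun a σ => ?_, fun a ha => ?_, fun a α hα => ?_, fun a => ?_⟩
    · rw [Pi.add_apply, Pi.add_apply, h1, h1', mul_add]
    · rw [Pi.add_apply, h2 a ha, h2' a ha, add_zero]
    · rw [Pi.add_apply, coeff_add, h3 a α hα, h3' a α hα, add_zero]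
    · simp only [Pi.add_apply, mul_add, Finset.sum_add_distrib]
      rw [h4, h4', add_zero]
  smul_mem' := by
    rintro z g ⟨h1, h2, h3, h4⟩
    refine ⟨fun a σ => ?_, fun a ha => ?_, fun a α hα => ?_, fun a => ?_⟩
    · rw [Pi.smul_apply, Pi.smul_apply, h1, mul_smul_comm]
    · rw [Pi.smul_apply, h2 a ha, smul_zero]
    · rw [Pi.smul_apply, coeff_smul, h3 a α hα, smul_zero]
    · simp only [Pi.smul_apply, mul_smul_comm, ← Finset.smul_sum]
      rw [h4, smul_zero]

theorem fm_mem_W {n d : ℕ} (hd : 0 < d) (A : Matrix (Fin n) (Fin n) ℂ) :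
    (fun a => fm A a) ∈ W n d :=
  ⟨fm_perm A, fm_noninj A, fm_homog A, fm_koszul hd A⟩

/-- index set of coordinates -/
def J (n e k : ℕ) : Type :=
  Σ m : Fin n, ↥((Finset.Ici m).finsuppAntidiag e) × ↥((Finset.Ioi m).powersetCard k)

instance (n e k : ℕ) : Fintype (J n e k) := by unfold J; infer_instance

theorem card_J (e k : ℕ) : Fintype.card (J (k + e + 1) e k) =
    Nat.choose (k + 2 * e + 1) (k + e + 1) * Nat.choose (k + e) k := by
  have h1 : Fintype.card (J (k + e + 1) e k) =
      ∑ m : Fin (k + e + 1), (k + e + 1 - (m : ℕ) + e - 1).choose e *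
        (k + e - (m : ℕ)).choose k := by
    unfold J
    rw [Fintype.card_sigma]
    refine Finset.sum_congr rfl fun m _ => ?_
    rw [Fintype.card_prod, Fintype.card_coe, Fintype.card_coe,
      card_finsuppAntidiag_nat_eq_choose, card_powersetCard, Fin.card_Ici, Fin.card_Ioi]
    congr 2
  rw [h1, Fin.sum_univ_eq_sum_range
    (fun m => (k + e + 1 - m + e - 1).choose e * (k + e - m).choose k) (k + e + 1)]
  rw [← Finset.sum_range_reflect]
  have h2 : ∀ m ∈ Finset.range (k + e + 1),
      (k + e + 1 - (k + e + 1 - 1 - m) + e - 1).choose e * (k + e - (k + e + 1 - 1 - m)).choose k =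
      (m + e).choose (k + e) * (k + e).choose k := by
    intro m hm
    rw [Finset.mem_range] at hm
    have a1 : k + e + 1 - (k + e + 1 - 1 - m) + e - 1 = m + e := by omega
    have a2 : k + e - (k + e + 1 - 1 - m) = m := by omega
    rw [a1, a2]
    have := Nat.choose_mul (n := m + e) (k := k + e) (s := e) (by omega)
    rw [Nat.add_sub_cancel, Nat.add_sub_cancel] at this
    rw [← this]
    congr 1
    rw [Nat.choose_symm_add]
  rw [Finset.sum_congr rfl h2, ← Finset.sum_mul]
  congr 1
  have h3 := Nat.sum_Icc_choose (k + 2 * e) (k + e)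
  rw [← h3]
  have h4 : ∑ m ∈ Finset.range (k + e + 1), (m + e).choose (k + e) =
      ∑ m ∈ Finset.Ico e (k + 2 * e + 1), m.choose (k + e) := by
    rw [Finset.sum_Ico_eq_sum_range]
    rw [show k + 2 * e + 1 - e = k + e + 1 by omega]
    refine Finset.sum_congr rfl fun m _ => by rw [add_comm]
  rw [h4]
  symm
  refine Finset.sum_subset ?_ ?_
  · intro m hm
    simp only [Finset.mem_Icc, Finset.mem_Ico] at hm ⊢
    omega
  · intro m hm hm'
    simp only [Finset.mem_Icc, Finset.mem_Ico] at hm hm'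
    exact Nat.choose_eq_zero_of_lt (by omega)

end SubDisc

namespace SubDisc

open Finset MvPolynomial

theorem exists_enum (n d : ℕ) (hn : 0 < n) : ∃ en : Finset (Fin n) → (Fin d → Fin n),
    ∀ I, I.card = d → Function.Injective (en I) ∧ Set.range (en I) = I := by
  have : ∀ I : Finset (Fin n), ∃ a : Fin d → Fin n,
      I.card = d → Function.Injective a ∧ Set.range a = I := by
    intro I
    by_cases h : I.card = d
    · exact ⟨I.orderEmbOfFin h, fun _ => ⟨(I.orderEmbOfFin h).injective, I.range_orderEmbOfFin h⟩⟩
    · exact ⟨fun _ => ⟨0, hn⟩, fun h' => absurd h' h⟩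
  choose en hen using this
  exact ⟨en, hen⟩

/-- coordinate map -/
noncomputable def coordMap (n e k : ℕ) (en : Finset (Fin n) → (Fin (e + 1) → Fin n)) :
    ((Fin (e + 1) → Fin n) → MvPolynomial (Fin n) ℂ) →ₗ[ℂ] (J n e k → ℂ) where
  toFun g := fun j => coeff (Finsupp.single j.1 1 + j.2.1.1) (g (en (j.2.2.1)ᶜ))
  map_add' g g' := by ext j; simp
  map_smul' z g := by ext j; simp

theorem good_zero {n e k : ℕ} (hn : n = k + e + 1) (en : Finset (Fin n) → (Fin (e + 1) → Fin n))
    (hen : ∀ I, I.card = e + 1 → Function.Injective (en I) ∧ Set.range (en I) = I)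
    (g : (Fin (e + 1) → Fin n) → MvPolynomial (Fin n) ℂ) (hg : g ∈ W n (e + 1))
    (h0 : coordMap n e k en g = 0) (a : Fin (e + 1) → Fin n) (α : Fin n →₀ ℕ) (m : Fin n)
    (hm : α m ≠ 0) (hα : ∀ j, α j ≠ 0 → m ≤ j) (ha : ∀ j, j ∉ Set.range a → m < j) :
    coeff α (g a) = 0 := by
  classical
  obtain ⟨h1, h2, h3, h4⟩ := hg
  by_cases hinj : Function.Injective a
  swap
  · rw [h2 a hinj, coeff_zero]
  by_cases hs : ∑ j, α j = e + 1
  swap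
  · exact h3 a α hs
  have hcard : (univ.image a).card = e + 1 := by
    rw [card_image_of_injective _ hinj]; simp
  obtain ⟨hi, hr⟩ := hen _ hcard
  obtain ⟨σ, hσ⟩ := exists_perm_of_image (en (univ.image a)) a hi hinj (by rw [hr]; simp)
  have hle : Finsupp.single m 1 ≤ α := by
    rw [Finsupp.single_le_iff]; omega
  have hK : (univ.image a)ᶜ ∈ (Finset.Ioi m).powersetCard k := by
    rw [mem_powersetCard]
    constructor
    · intro j hj
      rw [Finset.mem_Ioi]
      exact ha j (by simpa using hj)
    · rw [card_compl, hcard, Fintype.card_fin]; omega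
  have hsplit : Finsupp.single m 1 + (α - Finsupp.single m 1) = α := add_tsub_cancel_of_le hle
  have hsupp : (α - Finsupp.single m 1).support ⊆ Finset.Ici m := by
    intro j hj
    rw [Finset.mem_Ici]
    apply hα
    rw [Finsupp.mem_support_iff, Finsupp.tsub_apply] at hj
    omega
  have hβ : (α - Finsupp.single m 1) ∈ (Finset.Ici m).finsuppAntidiag e := by
    rw [mem_finsuppAntidiag]
    refine ⟨?_, hsupp⟩
    have e1 : ∑ j ∈ Finset.Ici m, (α - Finsupp.single m 1 : Fin n →₀ ℕ) j = ∑ j, (α - Finsupp.single m 1 : Fin n →₀ ℕ) j := by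
      refine Finset.sum_subset (subset_univ _) fun j _ hj => ?_
      by_contra hne
      exact hj (hsupp (Finsupp.mem_support_iff.mpr hne))
    have e2 : ∑ j, α j = 1 + ∑ j, (α - Finsupp.single m 1 : Fin n →₀ ℕ) j := by
      conv_lhs => rw [← hsplit]
      simp only [Finsupp.add_apply, Finset.sum_add_distrib]
      congr 1
      simp [Finsupp.single_apply]
    change ∑ j ∈ Finset.Ici m, (α - Finsupp.single m 1 : Fin n →₀ ℕ) j = e
    omega
  have hc := congrFun h0 ⟨m, ⟨_, hβ⟩, ⟨_, hK⟩⟩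
  simp only [coordMap, LinearMap.coe_mk, AddHom.coe_mk, compl_compl, hsplit] at hc
  change _ = (0 : ℂ) at hc
  rw [hσ, h1]
  rw [show ((Equiv.Perm.sign σ : ℤ) : MvPolynomial (Fin n) ℂ) =
    C ((Equiv.Perm.sign σ : ℤ) : ℂ) by simp, coeff_C_mul, hc, mul_zero]

theorem coord_inj {n e k : ℕ} (hn : n = k + e + 1) (en : Finset (Fin n) → (Fin (e + 1) → Fin n))
    (hen : ∀ I, I.card = e + 1 → Function.Injective (en I) ∧ Set.range (en I) = I)
    (g : (Fin (e + 1) → Fin n) → MvPolynomial (Fin n) ℂ) (hg : g ∈ W n (e + 1))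
    (h0 : coordMap n e k en g = 0) : g = 0 := by
  classical
  ext a α
  rw [Pi.zero_apply, coeff_zero]
  have hg' := hg
  obtain ⟨h1, h2, h3, h4⟩ := hg'
  by_cases hs : ∑ j, α j = e + 1
  swap
  · exact h3 a α hs
  obtain ⟨j0, -, hj0⟩ : ∃ j ∈ univ, α j ≠ 0 := by
    apply Finset.exists_ne_zero_of_sum_ne_zero
    omega
  set S : Finset (Fin n) := univ.filter (fun j => α j ≠ 0 ∨ j ∉ Set.range a) with hS
  have hSn : S.Nonempty := ⟨j0, by simp only [hS, mem_filter, mem_univ, true_and]; exact Or.inl hj0⟩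
  set m := S.min' hSn with hmdef
  have hmS : m ∈ S := S.min'_mem hSn
  have hmin : ∀ j, (α j ≠ 0 ∨ j ∉ Set.range a) → m ≤ j := fun j hj =>
    S.min'_le j (by simp only [hS, mem_filter, mem_univ, true_and]; exact hj)
  simp only [hS, mem_filter, mem_univ, true_and] at hmS
  by_cases hma : m ∈ Set.range a
  · refine good_zero hn en hen g hg h0 a α m (hmS.resolve_right (not_not.mpr hma))
      (fun j hj => hmin j (Or.inl hj)) (fun j hj => ?_)
    refine lt_of_le_of_ne (hmin j (Or.inr hj)) ?_
    rintro rfl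
    exact hj hma
  · have hk := h4 (Fin.cons m a)
    rw [Fin.sum_univ_succ] at hk
    have hk' := congrArg (coeff (α + Finsupp.single m 1)) hk
    rw [coeff_add, coeff_sum, coeff_zero, Finset.sum_eq_zero, add_zero] at hk'
    · have e1 : (Fin.cons m a : Fin (e + 1 + 1) → Fin n) ∘ (Fin.succAbove 0) = a := by
        ext i; simp
      rw [e1] at hk'
      simpa [add_comm α, coeff_X_mul] using hk'
    · intro i _
      rw [Fin.cons_succ, show ((-1 : MvPolynomial (Fin n) ℂ)) ^ ((Fin.succ i : Fin (e + 1 + 1)) : ℕ) =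
        C ((-1) ^ ((Fin.succ i : Fin (e + 1 + 1)) : ℕ)) by simp, mul_assoc, coeff_C_mul, coeff_X_mul']
      have hne : a i ≠ m := fun h => hma ⟨i, h⟩
      split_ifs with hi
      swap
      · simp
      have hai : α (a i) ≠ 0 := by
        rw [Finsupp.mem_support_iff, Finsupp.add_apply, Finsupp.single_eq_of_ne hne] at hi
        simpa using hi
      rw [good_zero hn en hen g hg h0 _ _ m, mul_zero]
      · rw [Finsupp.tsub_apply, Finsupp.add_apply, Finsupp.single_eq_same,
          Finsupp.single_eq_of_ne hne.symm]
        omega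
      · intro j hj
        by_cases hjm : j = m
        · exact hjm.ge
        · apply hmin j (Or.inl _)
          rw [Finsupp.tsub_apply, Finsupp.add_apply, Finsupp.single_eq_of_ne hjm] at hj
          omega
      · intro j hj
        have hjm : j ≠ m := by
          rintro rfl
          refine hj ⟨0, ?_⟩
          simp
        refine lt_of_le_of_ne (hmin j ?_) hjm.symm
        by_cases hja : j = a i
        · left; rw [hja]; exact hai
        · right
          rintro ⟨t, rfl⟩
          have hti : t ≠ i := fun h => hja (by rw [h])
          obtain ⟨t', ht'⟩ := Fin.exists_succAbove_eq (x := Fin.succ t) (y := Fin.succ i)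
            (by simpa using hti)
          exact hj ⟨t', by rw [Function.comp, ht', Fin.cons_succ]⟩

/-- from polynomial covariant to tensor -/
noncomputable def toT (n d : ℕ) : ((Fin d → Fin n) → MvPolynomial (Fin n) ℂ) →ₗ[ℂ]
    EuclideanSpace ℂ ((Fin d → Fin n) × (Fin d → Fin n)) where
  toFun g := WithLp.toLp 2 fun p =>
    ((univ.filter fun τ : Equiv.Perm (Fin d) => p.2 ∘ τ = p.2).card : ℂ) * coeff (cont p.2) (g p.1)
  map_add' g g' := by ext p; simp [mul_add]
  map_smul' z g := by ext p; simp; ring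

theorem exists_functionals {E : Type*} [NormedAddCommGroup E] [InnerProductSpace ℂ E]
    (S : Submodule ℂ E) [FiniteDimensional ℂ S] (N : ℕ) (hN : Module.finrank ℂ S ≤ N) :
    ∃ w : Fin N → E, ∀ x ∈ S, ‖x‖ ^ 2 = ∑ m, ‖inner ℂ (w m) x‖ ^ 2 := by
  set b := stdOrthonormalBasis ℂ S
  refine ⟨fun m => if h : (m : ℕ) < Module.finrank ℂ S then (b ⟨m, h⟩ : E) else 0, fun x hx => ?_⟩
  have h1 := b.sum_sq_norm_inner_right ⟨x, hx⟩
  rw [Submodule.coe_norm] at h1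
  simp only [Submodule.coe_inner] at h1
  rw [← h1]
  obtain ⟨r, rfl⟩ := Nat.exists_eq_add_of_le hN
  rw [Fin.sum_univ_add]
  simp

theorem exists_vectors (e k : ℕ) :
    ∃ w : Fin (Nat.choose (k + 2 * e + 1) (k + e + 1) * Nat.choose (k + e) k) →
      EuclideanSpace ℂ ((Fin (e + 1) → Fin (k + e + 1)) × (Fin (e + 1) → Fin (k + e + 1))),
      ∀ A : Matrix (Fin (k + e + 1)) (Fin (k + e + 1)) ℂ,
        ∑ a, ∑ b, ‖Tm (e + 1) A a b‖ ^ 2 =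
        ∑ m, ‖∑ p, Tm (e + 1) A p.1 p.2 * (starRingEnd ℂ) (w m p)‖ ^ 2 := by
  obtain ⟨en, hen⟩ := exists_enum (k + e + 1) (e + 1) (by omega)
  have hn : k + e + 1 = k + e + 1 := rfl
  set φ : W (k + e + 1) (e + 1) →ₗ[ℂ] (J (k + e + 1) e k → ℂ) := (coordMap (k + e + 1) e k en).comp (W (k + e + 1) (e + 1)).subtype with hφ
  have hinj : Function.Injective φ := by
    rw [← LinearMap.ker_eq_bot, LinearMap.ker_eq_bot']
    rintro ⟨g, hg⟩ h
    exact Subtype.ext (coord_inj hn en hen g hg h)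
  have : FiniteDimensional ℂ (W (k + e + 1) (e + 1)) := FiniteDimensional.of_injective φ hinj
  have hdim : Module.finrank ℂ (W (k + e + 1) (e + 1)) ≤
      Nat.choose (k + 2 * e + 1) (k + e + 1) * Nat.choose (k + e) k := by
    have := LinearMap.finrank_le_finrank_of_injective hinj
    rwa [Module.finrank_fintype_fun_eq_card, card_J] at this
  obtain ⟨w, hw⟩ := exists_functionals ((W (k + e + 1) (e + 1)).map (toT (k + e + 1) (e + 1))) _
    ((Submodule.finrank_map_le _ _).trans hdim)
  refine ⟨w, fun A => ?_⟩
  have hmem := Submodule.mem_map_of_mem (f := toT (k + e + 1) (e + 1)) (fm_mem_W (d := e + 1) (by omega) A)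
  have hT : ∀ p, (toT (k + e + 1) (e + 1) fun a => fm A a) p = Tm (e + 1) A p.1 p.2 := by
    intro p
    rw [Tm_eq_coeff]
    rfl
  have h := hw _ hmem
  rw [EuclideanSpace.norm_sq_eq, Fintype.sum_prod_type] at h
  simp only [hT] at h
  rw [h]
  refine Finset.sum_congr rfl fun m _ => ?_
  rw [PiLp.inner_apply]
  simp only [hT]
  rfl

end SubDisc

/-- The `k`-subdiscriminant of Hermitian `n×n` matrices is a sum of `2N` squares,
where `N = binom(2n-k-1, n) · binom(n-1, k)` is the dimension of the irreducible
`SL(n,ℂ)`-module with highest weight `(n-k, 1^k)`. -/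
theorem stmt_17 (n k : ℕ) (hn : 3 ≤ n) (hk : k ≤ n - 3) (N : ℕ)
    (hN : N = Nat.choose (2 * n - k - 1) n * Nat.choose (n - 1) k) :
    ∃ q : Fin N → MvPolynomial (Fin n × Fin n) ℂ,
      ∀ A : Matrix (Fin n) (Fin n) ℂ, ∀ hA : A.IsHermitian,
        ∑ s ∈ Finset.univ.powersetCard (n - k),
          ∏ i ∈ s, ∏ j ∈ s.filter (fun j => i < j),
            (hA.eigenvalues i - hA.eigenvalues j) ^ 2
        = ∑ m : Fin N, ‖MvPolynomial.eval (fun p => A p.1 p.2) (q m)‖ ^ 2 := by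
  obtain ⟨e, rfl⟩ : ∃ e, n = k + e + 1 := ⟨n - k - 1, by omega⟩
  rw [show 2 * (k + e + 1) - k - 1 = k + 2 * e + 1 by omega,
    show k + e + 1 - 1 = k + e by omega] at hN
  subst hN
  rw [show k + e + 1 - k = e + 1 by omega]
  obtain ⟨w, hw⟩ := SubDisc.exists_vectors e k
  refine ⟨fun m => MvPolynomial.C (((e + 1).factorial : ℂ)⁻¹) *
    ∑ p, SubDisc.Tm (e + 1) (Matrix.mvPolynomialX (Fin (k + e + 1)) (Fin (k + e + 1)) ℂ) p.1 p.2 *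
      MvPolynomial.C ((starRingEnd ℂ) (w m p)), fun A hA => ?_⟩
  have hev : ∀ a b, MvPolynomial.eval (fun p : Fin (k + e + 1) × Fin (k + e + 1) => A p.1 p.2)
      (SubDisc.Tm (e + 1) (Matrix.mvPolynomialX (Fin (k + e + 1)) (Fin (k + e + 1)) ℂ) a b) =
      SubDisc.Tm (e + 1) A a b := by
    intro a b
    rw [← SubDisc.Tm_map]
    congr 1
    rw [Matrix.mvPolynomialX_mapMatrix_eval]
  have h1 := hw A
  rw [SubDisc.sum_norm_Tm A hA, SubDisc.sum_vander] at h1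
  have hf : ((e + 1).factorial : ℝ) ≠ 0 := by positivity
  simp only [map_mul, map_sum, hev, MvPolynomial.eval_C, norm_mul, mul_pow]
  rw [← Finset.mul_sum, ← h1, norm_inv, Complex.norm_natCast]
  field_simp
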